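/- arXiv:2206.10723 — 2 statements merged into one kernel-verified Lean document; each statement's English description precedes it below -/
import Mathlib

section
/- Let h : [0,∞) → ℝ be continuous and regularly varying (at infinity) with index α ∈ [0,1). Then, as R → ∞, (1/R²) ∫₀^R ∫₀^R h(|x−y|) dx dy ∼ 2h(R)/((2−α)(1−α)). -/
open Filter

/-- A function `L` is slowly varying (at infinity) if it is continuous and strictly positive
on `(0,∞)` and `L(ax)/L(x) → 1` as `x → ∞` for every `a > 0`. -/
def SlowlyVarying (L : ℝ → ℝ) : Prop :=
  ContinuousOn L (Set.Ioi 0) ∧ (∀ x : ℝ, 0 < x → 0 < L x) ∧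
    ∀ a : ℝ, 0 < a → Tendsto (fun x => L (a * x) / L x) atTop (nhds 1)

/-- A continuous function `h` on `(0,∞)` is regularly varying (at infinity) with index `α`
if `h(x) ∼ x^(-α) L(x)` as `x → ∞` for some slowly varying `L`. -/
def RegularlyVarying (h : ℝ → ℝ) (α : ℝ) : Prop :=
  ContinuousOn h (Set.Ioi 0) ∧
    ∃ L : ℝ → ℝ, SlowlyVarying L ∧
      Tendsto (fun x => h x / (x ^ (-α) * L x)) atTop (nhds 1)

/-!
The symmetric double integral equals `2 R² ∫₀¹ (1 - t) h(tR) dt`, and `h(tR) / h(R) → t^(-α)` for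
each `t > 0`. Since `∫₀¹ (1 - t) t^(-α) dt = 1 / ((2 - α)(1 - α))`, the result is a matter of
passing to the limit under the integral sign (Karamata's theorem). The dominating function
`C t^(-β)`, with `max α 0 < β < 1`, comes from Potter's bound for large arguments and from the
boundedness of `h` near `0` for the others.

Potter's bound is proved for `f = log ∘ L ∘ exp`, whose increments over a fixed step tend to `0`.
Baire's theorem makes this convergence uniform for steps in `[0, 1]`, and adding up unit steps
shows that `f` eventually grows more slowly than any linear function.
-/

open MeasureTheory Set Topology

section AdditivelySlowlyVarying

variable {E : Type*} [SeminormedAddCommGroup E] {f : ℝ → E}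

/-- A function `f` on the line is additively slowly varying (at infinity) if it is continuous and
its increments `f (x + u) - f x` over each fixed step `u` tend to `0` as `x → ∞`. The substitution
`f = log ∘ L ∘ exp` turns slow variation of `L` into this notion. -/
def AdditivelySlowlyVarying (f : ℝ → E) : Prop :=
  Continuous f ∧ ∀ u, Tendsto (fun x => f (x + u) - f x) atTop (𝓝 0)

namespace AdditivelySlowlyVarying

theorem tendsto_sub_prod_nhds_zero (hf : AdditivelySlowlyVarying f) :
    Tendsto (fun p : ℝ × ℝ => f (p.1 + p.2) - f p.1) (atTop ×ˢ 𝓝 0) (𝓝 0) := by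
  obtain ⟨hcont, hlim⟩ := hf
  rw [NormedAddGroup.tendsto_nhds_zero]
  intro ε hε
  let S (n : ℕ) : Set ℝ := {u | ∀ x : ℝ, n ≤ x → ‖f (x + u) - f x‖ ≤ ε / 3}
  have isClosed_S (n : ℕ) : IsClosed (S n) := by
    simp only [S, ofPred_forall]
    exact isClosed_iInter fun x => isClosed_iInter fun _ =>
      isClosed_le (by fun_prop) continuous_const
  have iUnion_S : ⋃ n, S n = univ := by
    refine eq_univ_of_forall fun u => mem_iUnion.2 ?_
    obtain ⟨X, hX⟩ := eventually_atTop.1 <|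
      NormedAddGroup.tendsto_nhds_zero.1 (hlim u) (ε / 3) (by positivity)
    obtain ⟨n, hn⟩ := exists_nat_ge X
    exact ⟨n, fun x hx => (hX x (hn.trans hx)).le⟩
  obtain ⟨n, a, ha⟩ := nonempty_interior_of_iUnion_of_closed isClosed_S iUnion_S
  have shift_mem : ∀ᶠ v in 𝓝 (0 : ℝ), a + v ∈ S n := by
    have : Tendsto (a + ·) (𝓝 0) (𝓝 a) := by
      simpa only [add_zero] using (continuous_const_add a).tendsto 0
    exact this.eventually (mem_interior_iff_mem_nhds.1 ha)
  filter_upwards [(eventually_ge_atTop (n + a)).prod_mk shift_mem] with ⟨y, v⟩ ⟨hy, hv⟩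
  have h_base := interior_subset ha (y - a) (by linarith)
  have h_shift := hv (y - a) (by linarith)
  rw [sub_add_cancel] at h_base
  rw [← add_assoc, sub_add_cancel] at h_shift
  -- The increments over `a + v` and `a`, both from `y - a`, differ by the one over `v` from `y`.
  calc ‖f (y + v) - f y‖ = ‖(f (y + v) - f (y - a)) - (f y - f (y - a))‖ := by
        rw [sub_sub_sub_cancel_right]
    _ ≤ ε / 3 + ε / 3 := norm_sub_le_of_le h_shift h_base
    _ < ε := by linarith

theorem tendstoLocallyUniformly_sub (hf : AdditivelySlowlyVarying f) :
    TendstoLocallyUniformly (fun x u => f (x + u) - f x) 0 atTop := by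
  rw [tendstoLocallyUniformly_iff_forall_tendsto]
  intro u
  have shift : Tendsto (fun p : ℝ × ℝ => (p.1 + u, p.2 - u)) (atTop ×ˢ 𝓝 u) (atTop ×ˢ 𝓝 0) :=
    (tendsto_atTop_add_const_right _ u tendsto_id).prodMap
      (by simpa only [sub_self] using (continuous_sub_right u).tendsto u)
  have increments := (hf.tendsto_sub_prod_nhds_zero.comp shift).add ((hf.2 u).comp tendsto_fst)
  rw [add_zero] at increments
  refine tendsto_const_nhds.prodMk_nhds increments |>.congr ?_ |>.mono_right (nhds_le_uniformity 0)
  intro p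
  simp [add_assoc]

end AdditivelySlowlyVarying

theorem norm_sub_le_mul_of_forall_norm_sub_le {δ Y : ℝ}
    (hf : ∀ y, Y ≤ y → ∀ u ∈ Icc (0 : ℝ) 1, ‖f (y + u) - f y‖ ≤ δ) {x y : ℝ}
    (hy : Y ≤ y) (hyx : y ≤ x) : ‖f x - f y‖ ≤ δ * (x - y + 1) := by
  set n := ⌊x - y⌋₊
  have hn_le : n ≤ x - y := Nat.floor_le (by linarith)
  have hn_lt : x - y < n + 1 := Nat.lt_floor_add_one _
  have hδ : 0 ≤ δ := (norm_nonneg _).trans (hf y hy 0 ⟨le_rfl, zero_le_one⟩)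
  have unit_steps : ‖f (y + n) - f y‖ ≤ δ * n := by
    have := dist_le_range_sum_of_dist_le (f := fun k : ℕ => f (y + k)) n (d := fun _ => δ)
      fun {k} _ => by
        rw [dist_eq_norm', Nat.cast_succ, ← add_assoc]
        exact hf (y + k) (hy.trans (le_add_of_nonneg_right k.cast_nonneg)) 1
          ⟨zero_le_one, le_rfl⟩
    simpa [dist_eq_norm', mul_comm] using this
  have last_step : ‖f x - f (y + n)‖ ≤ δ := by
    simpa using hf (y + n) (hy.trans (le_add_of_nonneg_right n.cast_nonneg)) (x - (y + n))
      ⟨by linarith, by linarith⟩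
  calc ‖f x - f y‖ ≤ ‖f x - f (y + n)‖ + ‖f (y + n) - f y‖ := norm_sub_le_norm_sub_add_norm_sub ..
    _ ≤ δ + δ * n := add_le_add last_step unit_steps
    _ ≤ δ + δ * (x - y) := by gcongr
    _ = δ * (x - y + 1) := by ring

theorem AdditivelySlowlyVarying.eventually_norm_sub_le_mul (hf : AdditivelySlowlyVarying f)
    {δ : ℝ} (hδ : 0 < δ) :
    ∀ᶠ y in atTop, ∀ x, y ≤ x → ‖f x - f y‖ ≤ δ * (x - y + 1) := by
  have uniform := (tendstoLocallyUniformlyOn_iff_tendstoUniformlyOn_of_compact isCompact_Icc).1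
    (hf.tendstoLocallyUniformly_sub.tendstoLocallyUniformlyOn (s := Icc 0 1))
  obtain ⟨Y, hY⟩ := eventually_atTop.1 (Metric.tendstoUniformlyOn_iff.1 uniform δ hδ)
  filter_upwards [eventually_ge_atTop Y] with y hy x hyx
  refine norm_sub_le_mul_of_forall_norm_sub_le (fun z hz u hu => ?_) hy hyx
  simpa [dist_eq_norm'] using (hY z hz u hu).le

end AdditivelySlowlyVarying

namespace SlowlyVarying

variable {L : ℝ → ℝ}

theorem additivelySlowlyVarying_log_comp_exp (hL : SlowlyVarying L) :
    AdditivelySlowlyVarying fun x => Real.log (L (Real.exp x)) := by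
  obtain ⟨hcont, hpos, hlim⟩ := hL
  have ne_zero (x : ℝ) : L (Real.exp x) ≠ 0 := (hpos _ x.exp_pos).ne'
  refine ⟨(hcont.comp_continuous Real.continuous_exp Real.exp_pos).log ne_zero, fun u => ?_⟩
  have log_lim := ((hlim (Real.exp u) u.exp_pos).comp Real.tendsto_exp_atTop).log one_ne_zero
  rw [Real.log_one] at log_lim
  refine log_lim.congr fun x => ?_
  rw [Function.comp_apply, ← Real.exp_add, Real.log_div (ne_zero _) (ne_zero _), add_comm u x]

theorem eventually_le_mul_rpow_mul (hL : SlowlyVarying L) {C δ : ℝ} (hC : 1 < C) (hδ : 0 < δ) :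
    ∀ᶠ u in atTop, ∀ R, u ≤ R → L u ≤ C * (u / R) ^ (-δ) * L R := by
  set ε := min δ (Real.log C)
  have hε : 0 < ε := lt_min hδ (Real.log_pos hC)
  have log_bound := Real.tendsto_log_atTop.eventually
    (hL.additivelySlowlyVarying_log_comp_exp.eventually_norm_sub_le_mul hε)
  filter_upwards [log_bound, eventually_gt_atTop 0] with u hu hu0 R huR
  have hR0 : 0 < R := hu0.trans_le huR
  have hlog : Real.log u ≤ Real.log R := Real.log_le_log hu0 huR
  have log_L_le : Real.log (L u) ≤ Real.log C + (Real.log u - Real.log R) * -δ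
      + Real.log (L R) := by
    have h_abs := hu (Real.log R) hlog
    rw [Real.exp_log hu0, Real.exp_log hR0, Real.norm_eq_abs, mul_add_one] at h_abs
    have slope : ε * (Real.log R - Real.log u) ≤ δ * (Real.log R - Real.log u) :=
      mul_le_mul_of_nonneg_right (min_le_left ..) (sub_nonneg.2 hlog)
    have intercept : ε ≤ Real.log C := min_le_right ..
    linarith [neg_le_of_abs_le h_abs]
  rw [← Real.exp_le_exp, Real.exp_add, Real.exp_add, Real.exp_log (hL.2.1 u hu0),
    Real.exp_log (hL.2.1 R hR0), Real.exp_log (by linarith)] at log_L_le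
  rwa [Real.rpow_def_of_pos (div_pos hu0 hR0), Real.log_div hu0.ne' hR0.ne']

end SlowlyVarying

namespace RegularlyVarying

variable {h : ℝ → ℝ} {α β : ℝ}

theorem eventually_pos (hh : RegularlyVarying h α) : ∀ᶠ x in atTop, 0 < h x := by
  obtain ⟨-, L, ⟨-, hpos, -⟩, hlim⟩ := hh
  filter_upwards [hlim.eventually_const_lt zero_lt_one, eventually_gt_atTop 0] with x hx hx0
  exact (div_pos_iff_of_pos_right (mul_pos (Real.rpow_pos_of_pos hx0 _) (hpos x hx0))).1 hx

theorem tendsto_comp_mul_div (hh : RegularlyVarying h α) {t : ℝ} (ht : 0 < t) :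
    Tendsto (fun R => h (t * R) / h R) atTop (𝓝 (t ^ (-α))) := by
  have h_pos := hh.eventually_pos
  obtain ⟨-, L, ⟨-, hpos, hL⟩, hlim⟩ := hh
  have key := ((hlim.comp (tendsto_id.const_mul_atTop ht)).div hlim one_ne_zero).mul
    ((hL t ht).const_mul (t ^ (-α)))
  rw [div_one, one_mul, mul_one] at key
  refine key.congr' ?_
  filter_upwards [eventually_gt_atTop 0, h_pos] with R hR hhR
  have hLR : 0 < L R := hpos R hR
  have hLtR : 0 < L (t * R) := hpos (t * R) (mul_pos ht hR)
  simp only [Function.comp_apply, Pi.div_apply, id_eq]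
  rw [Real.mul_rpow ht.le hR.le]
  field_simp

theorem eventually_le_mul_rpow_mul (hh : RegularlyVarying h α) {C : ℝ} (hC : 1 < C)
    (hαβ : α < β) : ∀ᶠ u in atTop, ∀ R, u ≤ R → h u ≤ C * (u / R) ^ (-β) * h R := by
  obtain ⟨-, L, hL, hlim⟩ := hh
  obtain ⟨c, hc, rfl⟩ : ∃ c : ℝ, 1 < c ∧ c ^ 3 = C :=
    ⟨C ^ (3 : ℝ)⁻¹, Real.one_lt_rpow hC (by norm_num),
      by exact_mod_cast Real.rpow_inv_natCast_pow (n := 3) (by linarith) (by norm_num)⟩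
  have two_sided : ∀ᶠ u in atTop, h u ≤ c * (u ^ (-α) * L u) ∧ u ^ (-α) * L u ≤ c * h u := by
    filter_upwards [hlim.eventually_lt_const hc,
      hlim.eventually_const_lt (inv_lt_one_of_one_lt₀ hc), eventually_gt_atTop 0]
      with u hu_lt hu_gt hu0
    have model_pos := mul_pos (Real.rpow_pos_of_pos hu0 (-α)) (hL.2.1 u hu0)
    exact ⟨((div_lt_iff₀ model_pos).1 hu_lt).le,
      ((inv_mul_lt_iff₀ (by linarith)).1 ((lt_div_iff₀ model_pos).1 hu_gt)).le⟩
  filter_upwards [eventually_forall_ge_atTop.2 two_sided, eventually_gt_atTop 0,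
    hL.eventually_le_mul_rpow_mul hc (sub_pos.2 hαβ)] with u hu hu0 hLu R huR
  have hR0 : 0 < R := hu0.trans_le huR
  have hq : 0 < u / R := div_pos hu0 hR0
  have u_rpow : u ^ (-α) = (u / R) ^ (-α) * R ^ (-α) := by
    rw [← Real.mul_rpow hq.le hR0.le, div_mul_cancel₀ _ hR0.ne']
  calc h u ≤ c * (u ^ (-α) * L u) := (hu u le_rfl).1
    _ ≤ c * (u ^ (-α) * (c * (u / R) ^ (-(β - α)) * L R)) := by gcongr; exact hLu R huR
    _ = c ^ 2 * ((u / R) ^ (-α) * (u / R) ^ (-(β - α))) * (R ^ (-α) * L R) := by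
      rw [u_rpow]; ring
    _ = c ^ 2 * (u / R) ^ (-β) * (R ^ (-α) * L R) := by
      rw [← Real.rpow_add hq]; ring_nf
    _ ≤ c ^ 2 * (u / R) ^ (-β) * (c * h R) :=
      mul_le_mul_of_nonneg_left (hu R huR).2 (by positivity)
    _ = c ^ 3 * (u / R) ^ (-β) * h R := by ring

theorem exists_eventually_abs_le_mul_rpow_mul (hh : RegularlyVarying h α)
    (hcont : ContinuousOn h (Ici 0)) (hαβ : α < β) (hβ : 0 ≤ β) :
    ∃ C, ∀ᶠ R in atTop, ∀ u ∈ Ioc 0 R, |h u| ≤ C * (u / R) ^ (-β) * h R := by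
  obtain ⟨X, hX⟩ := eventually_atTop.1 <| (eventually_gt_atTop 0).and <|
    hh.eventually_pos.and <| hh.eventually_le_mul_rpow_mul one_lt_two hαβ
  obtain ⟨hX0, hhX, hXR⟩ := hX X le_rfl
  obtain ⟨K, hK⟩ := (isCompact_Icc (a := 0) (b := X)).exists_bound_of_continuousOn
    (hcont.mono Icc_subset_Ici_self)
  have hK0 : 0 ≤ K := (norm_nonneg _).trans (hK X ⟨hX0.le, le_rfl⟩)
  refine ⟨max 2 (K / h X * 2), ?_⟩
  filter_upwards [eventually_ge_atTop X] with R hR u ⟨hu0, huR⟩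
  obtain ⟨hR0, hhR, -⟩ := hX R hR
  rcases le_total X u with hu | hu
  · obtain ⟨-, hhu, hbound⟩ := hX u hu
    calc |h u| = h u := abs_of_pos hhu
      _ ≤ 2 * (u / R) ^ (-β) * h R := hbound R huR
      _ ≤ max 2 (K / h X * 2) * (u / R) ^ (-β) * h R := by gcongr; exact le_max_left ..
  · have rpow_le : (X / R) ^ (-β) ≤ (u / R) ^ (-β) :=
      Real.rpow_le_rpow_of_nonpos (div_pos hu0 hR0) (by gcongr) (by linarith)
    calc |h u| ≤ K := hK u ⟨hu0.le, hu⟩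
      _ = K / h X * h X := (div_mul_cancel₀ _ hhX.ne').symm
      _ ≤ K / h X * (2 * (X / R) ^ (-β) * h R) := by gcongr; exact hXR R hR
      _ ≤ K / h X * (2 * (u / R) ^ (-β) * h R) := by gcongr
      _ = K / h X * 2 * (u / R) ^ (-β) * h R := by ring
      _ ≤ max 2 (K / h X * 2) * (u / R) ^ (-β) * h R := by gcongr; exact le_max_right ..

theorem tendsto_integral_mul_comp_mul_div {k : ℝ → ℝ} (hh : RegularlyVarying h α)
    (hcont : ContinuousOn h (Ici 0)) (hαβ : α < β) (hβ : 0 ≤ β)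
    (hk : IntervalIntegrable (fun t => k t * t ^ (-β)) volume 0 1) :
    Tendsto (fun R => (∫ t in (0 : ℝ)..1, k t * h (t * R)) / h R) atTop
      (𝓝 (∫ t in (0 : ℝ)..1, k t * t ^ (-α))) := by
  obtain ⟨C, hC⟩ := hh.exists_eventually_abs_le_mul_rpow_mul hcont hαβ hβ
  simp_rw [← intervalIntegral.integral_div, mul_div_assoc]
  refine intervalIntegral.tendsto_integral_filter_of_dominated_convergence
    (fun t => C * ‖k t * t ^ (-β)‖) ?_ ?_ (hk.norm.const_mul C) ?_
  · filter_upwards [eventually_gt_atTop 0] with R hR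
    rw [uIoc_of_le zero_le_one]
    have h_cont : ContinuousOn (fun t => t ^ β * (h (t * R) / h R)) (Ioc 0 1) :=
      (Real.continuous_rpow_const hβ).continuousOn.mul <| .div_const
        (hcont.comp (by fun_prop) fun t ht => mul_nonneg ht.1.le hR.le) _
    refine (hk.1.aestronglyMeasurable.mul
      (h_cont.aestronglyMeasurable measurableSet_Ioc)).congr ?_
    filter_upwards [ae_restrict_mem measurableSet_Ioc] with t ht
    rw [Pi.mul_apply, mul_assoc, ← mul_assoc (t ^ (-β)), ← Real.rpow_add ht.1, neg_add_cancel,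
      Real.rpow_zero, one_mul]
  · filter_upwards [hC, hh.eventually_pos, eventually_gt_atTop 0] with R hCR hhR hR
    refine ae_of_all _ fun t ht => ?_
    rw [uIoc_of_le zero_le_one] at ht
    have h_le := hCR (t * R) ⟨mul_pos ht.1 hR, mul_le_of_le_one_left hR.le ht.2⟩
    rw [mul_div_cancel_right₀ _ hR.ne', ← div_le_iff₀ hhR] at h_le
    calc ‖k t * (h (t * R) / h R)‖ = ‖k t‖ * (|h (t * R)| / h R) := by
          rw [norm_mul, norm_div, Real.norm_of_nonneg hhR.le, Real.norm_eq_abs (h _)]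
      _ ≤ ‖k t‖ * (C * t ^ (-β)) := by gcongr
      _ = C * ‖k t * t ^ (-β)‖ := by
          rw [norm_mul, Real.norm_of_nonneg (Real.rpow_nonneg ht.1.le _)]; ring
  · refine ae_of_all _ fun t ht => ?_
    rw [uIoc_of_le zero_le_one] at ht
    exact (hh.tendsto_comp_mul_div ht.1).const_mul (k t)

end RegularlyVarying

section DoubleIntegral

variable {E : Type*} [NormedAddCommGroup E] [NormedSpace ℝ E] [CompleteSpace E]

theorem integral_integral_eq_integral_sub_smul {g : ℝ → E} (hg : Continuous g) (a b : ℝ) :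
    ∫ x in a..b, ∫ u in a..x, g u = ∫ u in a..b, (b - u) • g u := by
  have primitive (x : ℝ) : HasDerivAt (fun x => ∫ u in a..x, g u) (g x) x :=
    hg.integral_hasStrictDerivAt a x |>.hasDerivAt
  rw [intervalIntegral.integral_smul_deriv_eq_deriv_smul (u := fun x => b - x) (u' := fun _ => -1)
    (fun x _ => (hasDerivAt_id x).const_sub b) (fun x _ => primitive x)
    intervalIntegrable_const (hg.intervalIntegrable a b)]
  simp

theorem integral_integral_comp_sub {g : ℝ → E} (hg : Continuous g) (R : ℝ) :
    ∫ x in (0 : ℝ)..R, ∫ y in (0 : ℝ)..R, g (x - y) =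
      ∫ u in (0 : ℝ)..R, (R - u) • (g u + g (-u)) := by
  have hg_neg : Continuous fun u => g (-u) := by fun_prop
  have inner (x : ℝ) : ∫ y in (0 : ℝ)..R, g (x - y) =
      (∫ u in (0 : ℝ)..x, g u) + ∫ u in (0 : ℝ)..R - x, g (-u) := by
    rw [intervalIntegral.integral_comp_sub_left g x, intervalIntegral.integral_comp_neg g,
      neg_sub, neg_zero, sub_zero, add_comm,
      intervalIntegral.integral_add_adjacent_intervals (hg.intervalIntegrable _ _)
        (hg.intervalIntegrable _ _)]
  have continuous_primitive {f : ℝ → E} (hf : Continuous f) :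
      Continuous fun x => ∫ u in (0 : ℝ)..x, f u :=
    intervalIntegral.continuous_primitive (fun _ _ => hf.intervalIntegrable _ _) 0
  have continuous_reflected : Continuous fun x => ∫ u in (0 : ℝ)..R - x, g (-u) :=
    (continuous_primitive hg_neg).comp (continuous_sub_left R)
  simp_rw [inner, smul_add]
  rw [intervalIntegral.integral_add ((continuous_primitive hg).intervalIntegrable _ _)
      (continuous_reflected.intervalIntegrable _ _),
    intervalIntegral.integral_comp_sub_left (fun x => ∫ u in (0 : ℝ)..x, g (-u)) R, sub_self,
    sub_zero, integral_integral_eq_integral_sub_smul hg,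
    integral_integral_eq_integral_sub_smul hg_neg, intervalIntegral.integral_add]
  all_goals exact Continuous.intervalIntegrable (by fun_prop) _ _

theorem integral_integral_comp_abs_sub {h : ℝ → E} (hcont : ContinuousOn h (Ici 0)) {R : ℝ}
    (hR : 0 ≤ R) :
    ∫ x in (0 : ℝ)..R, ∫ y in (0 : ℝ)..R, h |x - y| =
      (2 * R ^ 2) • ∫ t in (0 : ℝ)..1, (1 - t) • h (t * R) := by
  have h_abs : Continuous fun x => h |x| :=
    hcont.comp_continuous continuous_abs fun x => abs_nonneg x
  rw [integral_integral_comp_sub h_abs R]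
  calc ∫ u in (0 : ℝ)..R, (R - u) • (h |u| + h |-u|)
      = ∫ u in (0 : ℝ)..R, (2 * (R - u)) • h u := by
        refine intervalIntegral.integral_congr fun u hu => ?_
        rw [uIcc_of_le hR] at hu
        simp only [abs_neg, abs_of_nonneg hu.1, ← two_smul ℝ (h u), smul_smul, mul_comm]
    _ = R • ∫ t in (0 : ℝ)..1, (2 * (R - t * R)) • h (t * R) := by
        simp only [intervalIntegral.smul_integral_comp_mul_right
          (f := fun u => (2 * (R - u)) • h u), zero_mul, one_mul]
    _ = (2 * R ^ 2) • ∫ t in (0 : ℝ)..1, (1 - t) • h (t * R) := by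
        rw [← intervalIntegral.integral_smul, ← intervalIntegral.integral_smul]
        congr 1 with t
        module

end DoubleIntegral

theorem integral_one_sub_mul_rpow_neg {α : ℝ} (hα : α < 1) :
    ∫ t in (0 : ℝ)..1, (1 - t) * t ^ (-α) = 1 / ((2 - α) * (1 - α)) := by
  have expand : ∫ t in (0 : ℝ)..1, (1 - t) * t ^ (-α) =
      ∫ t in (0 : ℝ)..1, (t ^ (-α) - t ^ (1 - α)) := by
    refine intervalIntegral.integral_congr_uIoo fun t ht => ?_
    rw [uIoo_of_le zero_le_one] at ht
    simp only [sub_eq_add_neg 1 α, Real.rpow_add ht.1, Real.rpow_one]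
    ring
  rw [expand, intervalIntegral.integral_sub
      (intervalIntegral.intervalIntegrable_rpow' (by linarith))
      (intervalIntegral.intervalIntegrable_rpow' (by linarith)),
    integral_rpow (.inl (by linarith)), integral_rpow (.inl (by linarith)),
    Real.one_rpow, Real.one_rpow, Real.zero_rpow (by linarith), Real.zero_rpow (by linarith)]
  have : 1 - α ≠ 0 := by linarith
  have : 2 - α ≠ 0 := by linarith
  rw [show -α + 1 = 1 - α by ring, show 1 - α + 1 = 2 - α by ring]
  field_simp
  ring

theorem statement1_general {h : ℝ → ℝ} {α : ℝ} (hcont : ContinuousOn h (Ici 0))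
    (hrv : RegularlyVarying h α) (hα : α < 1) :
    Tendsto (fun R =>
        ((1 / R ^ 2) * ∫ x in (0 : ℝ)..R, ∫ y in (0 : ℝ)..R, h |x - y|) /
          (2 * h R / ((2 - α) * (1 - α))))
      atTop (𝓝 1) := by
  obtain ⟨β, hβ, hβ1⟩ := exists_between (max_lt hα zero_lt_one)
  obtain ⟨hαβ, hβ0⟩ := max_lt_iff.1 hβ
  have kernel_integrable : IntervalIntegrable (fun t => (1 - t) * t ^ (-β)) volume 0 1 :=
    (intervalIntegral.intervalIntegrable_rpow' (by linarith)).continuousOn_mul (by fun_prop)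
  have karamata := hrv.tendsto_integral_mul_comp_mul_div hcont hαβ hβ0.le kernel_integrable
  have const_ne_zero : (2 - α) * (1 - α) ≠ 0 := by
    have : 0 < 1 - α := by linarith
    have : 0 < 2 - α := by linarith
    positivity
  rw [integral_one_sub_mul_rpow_neg hα] at karamata
  have normalized := karamata.const_mul ((2 - α) * (1 - α))
  rw [mul_one_div_cancel const_ne_zero] at normalized
  refine normalized.congr' ?_
  filter_upwards [eventually_gt_atTop 0, hrv.eventually_pos] with R hR hhR
  simp only [integral_integral_comp_abs_sub hcont hR.le, smul_eq_mul]
  generalize ∫ t in (0 : ℝ)..1, (1 - t) * h (t * R) = I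
  field_simp

/-- if `h : [0,∞) → ℝ` is continuous and regularly varying with index
`α ∈ [0,1)`, then `(1/R²) ∫₀^R ∫₀^R h(|x-y|) dx dy ∼ 2 h(R) / ((2-α)(1-α))` as `R → ∞`. -/
theorem statement1 (h : ℝ → ℝ) (α : ℝ)
    (hcont : ContinuousOn h (Set.Ici 0))
    (hrv : RegularlyVarying h α) (hα0 : 0 ≤ α) (hα1 : α < 1) :
    Tendsto (fun R =>
        ((1 / R ^ 2) * ∫ x in (0:ℝ)..R, ∫ y in (0:ℝ)..R, h |x - y|) /
          (2 * h R / ((2 - α) * (1 - α))))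
      atTop (nhds 1) :=
  statement1_general hcont hrv hα1
end

section
/- Let d ≥ 1 and let h : ℝ^d → ℝ be continuous, isotropic, positive definite, and such that its radial profile is regularly varying (at infinity) with index α ∈ [0, d). Then there exist continuous, isotropic, positive definite functions h₁, h₂ : ℝ^d → ℝ such that h = h₁ + h₂, h₁(x) ≥ 0 for all x ∈ ℝ^d, and h₁(x)/h(x) → 1 as |x| → ∞. -/
open Filter

/-- A kernel `K : ℝ^d → ℝ` is positive definite if all quadratic forms
`∑ i j, c i * c j * K (x i - x j)` are nonnegative. -/
def IsPosDefKernel {d : ℕ} (K : EuclideanSpace ℝ (Fin d) → ℝ) : Prop :=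
  ∀ (n : ℕ) (x : Fin n → EuclideanSpace ℝ (Fin d)) (c : Fin n → ℝ),
    0 ≤ ∑ i : Fin n, ∑ j : Fin n, c i * c j * K (x i - x j)

/-- A kernel is isotropic if it only depends on the Euclidean norm. -/
def IsIsotropic {d : ℕ} (K : EuclideanSpace ℝ (Fin d) → ℝ) : Prop :=
  ∀ x y : EuclideanSpace ℝ (Fin d), ‖x‖ = ‖y‖ → K x = K y

/-!
Take `h₁ x = ∫ h (x + y) dμ(y)` for a centred Gaussian `μ` of large width `σ`, and `h₂ = h - h₁`.

Since `μ = ν ∗ ν.neg` for another Gaussian `ν`, each quadratic form of `h₁` is the integral against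
`ν ∗ ν.neg` of a positive definite function `Q`, and is therefore nonnegative. The corresponding
form of `h` is `Q 0`, the maximum of `Q`, so that `h₂` is positive definite as well.

By the uniform convergence theorem for slowly varying functions, `h (x + y) / h x` tends to `1` and
grows at most polynomially in `y`, uniformly for large `x`; dominated convergence gives `h₁ ∼ h`.

For `h₁ ≥ 0`, shift the Gaussian to `x` and symmetrise in `y`: up to a positive factor, `h₁ x` is
the integral of `h y` against `exp (-‖y‖² / (2σ²)) * cosh (⟪x, y⟫ / σ²)`. The `cosh` factor grows
along rays, whatever `x` is, while `h y ≥ c / ‖y‖ ^ d` for `‖y‖ > M`. Hence each dyadic shell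
between `M` and `σ` contributes at least a fixed multiple of the integral of the `cosh` factor over
the ball of radius `M`. For `σ` large these contributions outweigh the negative part of `h`, which
lives in that ball.
-/

open MeasureTheory Set Topology

section AdditiveSlowVariation

variable {F : ℝ → ℝ}

/- Karamata's uniform convergence theorem near `0`. By Baire, one of the closed sets `A n` of
increments that are uniformly good on `[n, ∞)` contains a ball around some `c`; the increments
from `t - c` to `t + u` and to `t` are then both small. -/
theorem tendsto_sub_atTop_prod_nhds_zero (hF : Continuous F)
    (hlim : ∀ u, Tendsto (fun t => F (t + u) - F t) atTop (𝓝 0)) :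
    Tendsto (fun p : ℝ × ℝ => F (p.1 + p.2) - F p.1) (atTop ×ˢ 𝓝 0) (𝓝 0) := by
  rw [Metric.tendsto_nhds]
  intro ε hε
  let A : ℕ → Set ℝ := fun n => {u | ∀ t : ℝ, n ≤ t → dist (F (t + u)) (F t) ≤ ε / 3}
  have hclosed (n : ℕ) : IsClosed (A n) := by
    simp only [A, ofPred_forall]
    exact isClosed_iInter fun t => isClosed_iInter fun _ =>
      isClosed_le (by fun_prop) continuous_const
  have hcover : ⋃ n, A n = univ := by
    refine eq_univ_of_forall fun u => ?_
    obtain ⟨T, hT⟩ := eventually_atTop.1 <|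
      Metric.tendsto_nhds.1 (hlim u) (ε / 3) (by positivity)
    obtain ⟨n, hn⟩ := exists_nat_ge T
    refine mem_iUnion.2 ⟨n, fun t ht => ?_⟩
    simpa [dist_eq_norm] using (hT t (hn.trans ht)).le
  obtain ⟨n, c, hc⟩ := nonempty_interior_of_iUnion_of_closed hclosed hcover
  have hnear : ∀ᶠ u in 𝓝 (0 : ℝ), c + u ∈ A n := by
    have : Tendsto (fun u => c + u) (𝓝 0) (𝓝 c) := Continuous.tendsto' (by fun_prop) _ _ (by simp)
    exact this (mem_interior_iff_mem_nhds.1 hc)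
  filter_upwards [(eventually_ge_atTop (n + c)).prod_mk hnear] with ⟨t, u⟩ ⟨ht, hu⟩
  have hfar := hu (t - c) (by linarith)
  have hbase := interior_subset hc (t - c) (by linarith)
  rw [show t - c + (c + u) = t + u by ring] at hfar
  rw [sub_add_cancel] at hbase
  rw [dist_zero_right, ← dist_eq_norm]
  linarith [dist_triangle_right (F (t + u)) (F t) (F (t - c))]

theorem exists_eventually_sub_mul_le (hF : Continuous F)
    (hlim : Tendsto (fun t => F (t + 1) - F t) atTop (𝓝 0)) {ε : ℝ} (hε : 0 < ε) :
    ∃ C, ∀ᶠ t in atTop, C - ε * t ≤ F t := by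
  obtain ⟨T, hT⟩ := eventually_atTop.1 (hlim.eventually_const_le (neg_lt_zero.2 hε))
  have hstep (s : ℝ) (hs : T ≤ s) (n : ℕ) : F s + ε * s ≤ F (s + n) + ε * (s + n) := by
    induction n with
    | zero => simp
    | succ n ih =>
      have := hT (s + n) (hs.trans (by simp))
      push_cast
      rw [← add_assoc]
      linarith
  obtain ⟨m, hm⟩ := (isCompact_Icc (a := T) (b := T + 1)).bddBelow_image
    (f := fun s => F s + ε * s) (by fun_prop)
  refine ⟨m, eventually_atTop.2 ⟨T, fun t ht => ?_⟩⟩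
  have hfloor := Nat.floor_le (sub_nonneg.2 ht)
  have hmem : t - ⌊t - T⌋₊ ∈ Icc T (T + 1) :=
    ⟨by linarith, by linarith [Nat.lt_floor_add_one (t - T)]⟩
  have hchain := hstep _ hmem.1 ⌊t - T⌋₊
  rw [sub_add_cancel] at hchain
  linarith [hm (mem_image_of_mem _ hmem)]

end AdditiveSlowVariation

namespace SlowlyVarying

variable {L : ℝ → ℝ}

theorem continuous_log_comp_exp (hL : SlowlyVarying L) :
    Continuous fun t => Real.log (L (Real.exp t)) :=
  (hL.1.comp_continuous Real.continuous_exp Real.exp_pos).log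
    fun t => (hL.2.1 _ (Real.exp_pos t)).ne'

theorem tendsto_log_comp_exp_sub (hL : SlowlyVarying L) (u : ℝ) :
    Tendsto (fun t => Real.log (L (Real.exp (t + u))) - Real.log (L (Real.exp t)))
      atTop (𝓝 0) := by
  have h := ((hL.2.2 _ (Real.exp_pos u)).comp Real.tendsto_exp_atTop).log one_ne_zero
  rw [Real.log_one] at h
  refine h.congr fun t => ?_
  simp only [Function.comp_apply, ← Real.exp_add, add_comm u]
  exact Real.log_div (hL.2.1 _ (Real.exp_pos _)).ne' (hL.2.1 _ (Real.exp_pos _)).ne'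

theorem tendsto_div_atTop_prod_nhds_one (hL : SlowlyVarying L) :
    Tendsto (fun p : ℝ × ℝ => L (p.2 * p.1) / L p.1) (atTop ×ˢ 𝓝 1) (𝓝 1) := by
  have hlog : Tendsto Real.log (𝓝 1) (𝓝 0) := by
    simpa using (Real.continuousAt_log one_ne_zero).tendsto
  have h := ((tendsto_sub_atTop_prod_nhds_zero hL.continuous_log_comp_exp
    hL.tendsto_log_comp_exp_sub).comp (Real.tendsto_log_atTop.prodMap hlog)).rexp
  rw [Real.exp_zero] at h
  refine h.congr' ?_
  filter_upwards [(eventually_gt_atTop 0).prod_mk (lt_mem_nhds one_pos)] with ⟨r, a⟩ ⟨hr, ha⟩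
  simp only [Function.comp_apply, Prod.map_apply, Real.exp_add, Real.exp_log hr, Real.exp_log ha,
    Real.exp_sub, Real.exp_log (hL.2.1 _ hr), mul_comm r, Real.exp_log (hL.2.1 _ (mul_pos ha hr))]

theorem exists_eventually_le_mul_rpow (hL : SlowlyVarying L) {ε : ℝ} (hε : 0 < ε) :
    ∃ c > 0, ∀ᶠ r in atTop, c ≤ L r * r ^ ε := by
  obtain ⟨C, hC⟩ := exists_eventually_sub_mul_le hL.continuous_log_comp_exp
    (hL.tendsto_log_comp_exp_sub 1) hε
  refine ⟨Real.exp C, Real.exp_pos C, ?_⟩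
  filter_upwards [Real.tendsto_log_atTop.eventually hC, eventually_gt_atTop 0] with r hlog hr
  rw [Real.exp_log hr] at hlog
  have hLr := hL.2.1 r hr
  rw [← Real.le_log_iff_exp_le (by positivity), Real.log_mul hLr.ne' (by positivity),
    Real.log_rpow hr]
  linarith

end SlowlyVarying

namespace RegularlyVarying

variable {k : ℝ → ℝ} {α : ℝ}

theorem tendsto_div_atTop_prod_nhds_one (hk : RegularlyVarying k α) :
    Tendsto (fun p : ℝ × ℝ => k (p.2 * p.1) / k p.1) (atTop ×ˢ 𝓝 1) (𝓝 1) := by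
  obtain ⟨-, L, hL, hkL⟩ := hk
  have hscale : Tendsto (fun p : ℝ × ℝ => p.2 * p.1) (atTop ×ˢ 𝓝 1) atTop :=
    tendsto_snd.pos_mul_atTop one_pos tendsto_fst
  have hpow : Tendsto (fun p : ℝ × ℝ => p.2 ^ (-α)) (atTop ×ˢ 𝓝 1) (𝓝 1) := by
    simpa using tendsto_snd.rpow_const (p := -α) (Or.inl one_ne_zero)
  have h := ((hkL.comp hscale).div (hkL.comp tendsto_fst) one_ne_zero).mul
    (hpow.mul hL.tendsto_div_atTop_prod_nhds_one)
  simp only [div_one, mul_one] at h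
  refine h.congr' ?_
  filter_upwards [(eventually_gt_atTop 0).prod_mk (lt_mem_nhds one_pos)] with ⟨r, a⟩ ⟨hr, ha⟩
  have hLr := (hL.2.1 r hr).ne'
  have hLar := (hL.2.1 _ (mul_pos ha hr)).ne'
  have hrα := (Real.rpow_pos_of_pos hr (-α)).ne'
  have haα := (Real.rpow_pos_of_pos ha (-α)).ne'
  simp only [Function.comp_apply, Pi.div_apply, Real.mul_rpow ha.le hr.le]
  field_simp

theorem exists_eventually_le_mul_rpow (hk : RegularlyVarying k α) {β : ℝ} (hαβ : α < β) :
    ∃ c > 0, ∀ᶠ r in atTop, c ≤ k r * r ^ β := by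
  obtain ⟨-, L, hL, hkL⟩ := hk
  obtain ⟨c, hc, hLc⟩ := hL.exists_eventually_le_mul_rpow (sub_pos.2 hαβ)
  refine ⟨c / 2, half_pos hc, ?_⟩
  filter_upwards [hLc, hkL.eventually_const_le one_half_lt_one, eventually_gt_atTop 0]
    with r hLr hkr hr
  rw [le_div_iff₀ (mul_pos (Real.rpow_pos_of_pos hr _) (hL.2.1 r hr))] at hkr
  calc c / 2 ≤ 1 / 2 * (L r * r ^ (β - α)) := by linarith
    _ = 1 / 2 * (r ^ (-α) * L r) * r ^ β := by
      rw [sub_eq_neg_add, Real.rpow_add hr]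
      ring
    _ ≤ k r * r ^ β := by gcongr

end RegularlyVarying

section DoubleIntegral

variable {X : Type*} [MeasurableSpace X] {ν : Measure X} [IsProbabilityMeasure ν]
  {G : X × X → ℝ} {B : ℝ}

theorem integral_pi_eval_pair (hG : AEStronglyMeasurable G (ν.prod ν)) {n : ℕ} {i j : Fin n}
    (hij : i ≠ j) :
    ∫ ω, G (ω i, ω j) ∂(Measure.pi fun _ : Fin n => ν) = ∫ p, G p ∂(ν.prod ν) := by
  have hindep := (ProbabilityTheory.iIndepFun_pi (μ := fun _ : Fin n => ν) (X := fun _ => id)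
    fun _ => aemeasurable_id).indepFun hij
  have hmap : (Measure.pi fun _ : Fin n => ν).map (fun ω => (ω i, ω j)) = ν.prod ν := by
    have := (ProbabilityTheory.indepFun_iff_map_prod_eq_prod_map_map
      (measurable_pi_apply i).aemeasurable (measurable_pi_apply j).aemeasurable).1 hindep
    rwa [(measurePreserving_eval (fun _ : Fin n => ν) i).map_eq,
      (measurePreserving_eval (fun _ : Fin n => ν) j).map_eq] at this
  rw [← hmap] at hG ⊢
  exact (integral_map (by fun_prop) hG).symm

/- Averaging the hypothesis over `n + 1` independent samples of `ν` gives
`0 ≤ (n + 1) B + (n + 1) n I`, where `I` is the integral; now let `n → ∞`. -/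
theorem integral_prod_nonneg_of_sum_nonneg (hG : Measurable G) (hB : ∀ p, |G p| ≤ B)
    (hsum : ∀ (n : ℕ) (x : Fin n → X), 0 ≤ ∑ i, ∑ j, G (x i, x j)) :
    0 ≤ ∫ p, G p ∂(ν.prod ν) := by
  set I := ∫ p, G p ∂(ν.prod ν)
  have hmean (n : ℕ) : 0 ≤ B + n * I := by
    let P : Measure (Fin (n + 1) → X) := Measure.pi fun _ => ν
    have hint (i j : Fin (n + 1)) : Integrable (fun ω => G (ω i, ω j)) P :=
      have hpair : Measurable fun ω : Fin (n + 1) → X => (ω i, ω j) := by fun_prop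
      .of_bound (hG.comp hpair).aestronglyMeasurable B (.of_forall fun ω => hB _)
    have hle (i j : Fin (n + 1)) :
        ∫ ω, G (ω i, ω j) ∂P ≤ I + if i = j then B - I else 0 := by
      split_ifs with hij
      · calc ∫ ω, G (ω i, ω j) ∂P ≤ ∫ _, B ∂P :=
              integral_mono (hint i j) (integrable_const B) fun ω => (abs_le.1 (hB _)).2
          _ = I + (B - I) := by simp
      · rw [add_zero]
        exact (integral_pi_eval_pair hG.aestronglyMeasurable hij).le
    have htotal : 0 ≤ (n + 1) * (B + n * I) := calc
      0 ≤ ∫ ω, ∑ i, ∑ j, G (ω i, ω j) ∂P := integral_nonneg fun ω => hsum _ ω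
      _ = ∑ i, ∑ j, ∫ ω, G (ω i, ω j) ∂P := by
        rw [integral_finsetSum _ fun i _ => integrable_finsetSum _ fun j _ => hint i j]
        simp_rw [integral_finsetSum _ fun j _ => hint _ j]
      _ ≤ ∑ i : Fin (n + 1), ∑ j, (I + if i = j then B - I else 0) := by
        gcongr with i _ j _
        exact hle i j
      _ = (n + 1) * (B + n * I) := by
        simp only [Finset.sum_add_distrib, Finset.sum_const, Finset.card_univ, Fintype.card_fin,
          Finset.sum_ite_eq, Finset.mem_univ, if_true, nsmul_eq_mul]
        push_cast
        ring
    exact nonneg_of_mul_nonneg_right htotal (by positivity)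
  by_contra! hneg
  obtain ⟨n, hn⟩ := exists_nat_gt (B / -I)
  rw [div_lt_iff₀ (neg_pos.2 hneg)] at hn
  linarith [hmean n]

end DoubleIntegral

/-- The average `x ↦ ∫ f (x + y) dμ(y)` of the translates of `f` with respect to `μ`. No
reflection is applied to `y`, so this is the usual convolution `f * μ` only for symmetric `μ`. -/
noncomputable def smoothing {E : Type*} [Add E] [MeasurableSpace E] (μ : Measure E) (f : E → ℝ)
    (x : E) : ℝ :=
  ∫ y, f (x + y) ∂μ

theorem continuous_smoothing {E : Type*} [NormedAddCommGroup E] [MeasurableSpace E] [BorelSpace E]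
    {μ : Measure E} [IsFiniteMeasure μ] {f : E → ℝ} (hf : Continuous f) {B : ℝ}
    (hB : ∀ x, |f x| ≤ B) : Continuous (smoothing μ f) :=
  continuous_of_dominated (bound := fun _ => B)
    (fun x => (by fun_prop : Continuous fun y => f (x + y)).aestronglyMeasurable)
    (fun x => .of_forall fun y => hB (x + y)) (integrable_const B) (.of_forall fun y => by fun_prop)

theorem IsIsotropic.smoothing {d : ℕ} {K : EuclideanSpace ℝ (Fin d) → ℝ} (hK : IsIsotropic K)
    {μ : Measure (EuclideanSpace ℝ (Fin d))}
    (hμ : ∀ ρ : EuclideanSpace ℝ (Fin d) ≃ₗᵢ[ℝ] EuclideanSpace ℝ (Fin d), μ.map ρ = μ) :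
    IsIsotropic (smoothing μ K) := by
  intro x x' hx
  let ρ := Submodule.reflection (Submodule.span ℝ {x - x'})ᗮ
  have hρ : ρ x = x' := Submodule.reflection_sub hx
  calc ∫ y, K (x + y) ∂μ = ∫ y, K (x' + ρ y) ∂μ := by
        simp_rw [← hρ, ← map_add, hK _ _ (ρ.norm_map _)]
    _ = ∫ y, K (x' + y) ∂(μ.map ρ) :=
        (ρ.toHomeomorph.measurableEmbedding.integral_map fun y => K (x' + y)).symm
    _ = ∫ y, K (x' + y) ∂μ := by rw [hμ]

namespace IsPosDefKernel

variable {d : ℕ} {K : EuclideanSpace ℝ (Fin d) → ℝ}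

theorem sum_nonneg (hK : IsPosDefKernel K) {ι : Type*} [Fintype ι]
    (x : ι → EuclideanSpace ℝ (Fin d)) (c : ι → ℝ) :
    0 ≤ ∑ i, ∑ j, c i * c j * K (x i - x j) := by
  let e := (Fintype.equivFin ι).symm
  rw [← e.sum_comp]
  simp_rw [← e.sum_comp fun j => c (e _) * c j * K (x (e _) - x j)]
  exact hK _ (x ∘ e) (c ∘ e)

theorem abs_le_apply_zero (hK : IsPosDefKernel K) (heven : Function.Even K)
    (x : EuclideanSpace ℝ (Fin d)) : |K x| ≤ K 0 := by
  have hform (c : ℝ) : 0 ≤ K 0 + c * c * K 0 + 2 * c * K x := by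
    have := hK 2 ![0, x] ![1, c]
    simp only [Fin.sum_univ_two, Matrix.cons_val_zero, Matrix.cons_val_one, sub_self, zero_sub,
      sub_zero, heven x] at this
    linarith
  exact abs_le'.2 ⟨by linarith [hform (-1)], by linarith [hform 1]⟩

theorem integral_conv_neg_nonneg (hK : IsPosDefKernel K) (hcont : Continuous K) {B : ℝ}
    (hB : ∀ x, |K x| ≤ B) (ν : Measure (EuclideanSpace ℝ (Fin d))) [IsProbabilityMeasure ν] :
    0 ≤ ∫ y, K y ∂(ν ∗ ν.neg) := by
  have hlaw : ν ∗ ν.neg = (ν.prod ν).map fun p => p.1 - p.2 := by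
    have hprod : ν.prod ν.neg = (ν.prod ν).map (Prod.map id Neg.neg) := by
      rw [← Measure.map_prod_map _ _ measurable_id measurable_neg, Measure.map_id, Measure.neg]
    rw [Measure.conv, hprod, Measure.map_map (by fun_prop) (by fun_prop)]
    simp only [Function.comp_def, Prod.map_fst, Prod.map_snd, id_eq, sub_eq_add_neg]
  rw [hlaw, integral_map (by fun_prop) hcont.aestronglyMeasurable]
  exact integral_prod_nonneg_of_sum_nonneg (by fun_prop) (fun p => hB _)
    fun n x => by simpa using hK n x 1

end IsPosDefKernel

section QuadSum

variable {d n : ℕ} {K : EuclideanSpace ℝ (Fin d) → ℝ}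

/-- If `K` is the covariance kernel of a stationary field `Z`, then `quadSum K x c` is the
covariance kernel of the field `y ↦ ∑ i, c i * Z (x i + y)`. Its value at `0` is the quadratic
form of `K` at `(x, c)`, so that positive definiteness of smoothings of `K` becomes a statement
about integrals of positive definite kernels. -/
def quadSum (K : EuclideanSpace ℝ (Fin d) → ℝ) (x : Fin n → EuclideanSpace ℝ (Fin d))
    (c : Fin n → ℝ) (y : EuclideanSpace ℝ (Fin d)) : ℝ :=
  ∑ i, ∑ j, c i * c j * K (x i - x j + y)

theorem continuous_quadSum (hcont : Continuous K) (x : Fin n → EuclideanSpace ℝ (Fin d))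
    (c : Fin n → ℝ) : Continuous (quadSum K x c) := by
  unfold quadSum
  fun_prop

theorem even_quadSum (heven : Function.Even K) (x : Fin n → EuclideanSpace ℝ (Fin d))
    (c : Fin n → ℝ) : Function.Even (quadSum K x c) := by
  intro y
  unfold quadSum
  rw [Finset.sum_comm]
  refine Finset.sum_congr rfl fun j _ => Finset.sum_congr rfl fun i _ => ?_
  rw [← heven, show -(x i - x j + -y) = x j - x i + y by abel, mul_comm (c i)]

theorem isPosDefKernel_quadSum (hK : IsPosDefKernel K) (x : Fin n → EuclideanSpace ℝ (Fin d))
    (c : Fin n → ℝ) : IsPosDefKernel (quadSum K x c) := by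
  intro m y e
  refine (hK.sum_nonneg (ι := Fin m × Fin n) (fun p => x p.2 + y p.1)
    (fun p => e p.1 * c p.2)).trans_eq ?_
  simp_rw [quadSum, Fintype.sum_prod_type, Finset.mul_sum]
  refine Finset.sum_congr rfl fun a _ => ?_
  rw [Finset.sum_comm]
  refine Finset.sum_congr rfl fun b _ => Finset.sum_congr rfl fun i _ =>
    Finset.sum_congr rfl fun j _ => ?_
  rw [add_sub_add_comm]
  ring

theorem sum_smoothing_eq_integral_quadSum {μ : Measure (EuclideanSpace ℝ (Fin d))}
    [IsFiniteMeasure μ] (hcont : Continuous K) {B : ℝ} (hB : ∀ x, |K x| ≤ B)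
    (x : Fin n → EuclideanSpace ℝ (Fin d)) (c : Fin n → ℝ) :
    ∑ i, ∑ j, c i * c j * smoothing μ K (x i - x j) = ∫ y, quadSum K x c y ∂μ := by
  have hint (i j : Fin n) : Integrable (fun y => c i * c j * K (x i - x j + y)) μ :=
    (Integrable.of_bound (by fun_prop : Continuous fun y =>
      K (x i - x j + y)).aestronglyMeasurable B (.of_forall fun y => hB _)).const_mul _
  unfold quadSum smoothing
  rw [integral_finsetSum _ fun i _ => integrable_finsetSum _ fun j _ => hint i j]
  simp_rw [integral_finsetSum _ fun j _ => hint _ j, integral_const_mul]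

end QuadSum

section PosDefSmoothing

variable {d : ℕ} {K : EuclideanSpace ℝ (Fin d) → ℝ}

theorem IsPosDefKernel.smoothing_conv_neg (hK : IsPosDefKernel K) (hcont : Continuous K)
    (heven : Function.Even K) (ν : Measure (EuclideanSpace ℝ (Fin d))) [IsProbabilityMeasure ν] :
    IsPosDefKernel (smoothing (ν ∗ ν.neg) K) := by
  have : IsProbabilityMeasure ν.neg := Measure.isProbabilityMeasure_map (by fun_prop)
  intro n x c
  rw [sum_smoothing_eq_integral_quadSum hcont (hK.abs_le_apply_zero heven)]
  have hQ := isPosDefKernel_quadSum hK x c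
  exact hQ.integral_conv_neg_nonneg (continuous_quadSum hcont x c)
    (hQ.abs_le_apply_zero (even_quadSum heven x c)) ν

theorem IsPosDefKernel.sub_smoothing (hK : IsPosDefKernel K) (hcont : Continuous K)
    (heven : Function.Even K) (μ : Measure (EuclideanSpace ℝ (Fin d))) [IsProbabilityMeasure μ] :
    IsPosDefKernel (K - smoothing μ K) := by
  intro n x c
  have hQ := (isPosDefKernel_quadSum hK x c).abs_le_apply_zero (even_quadSum heven x c)
  have hint : Integrable (quadSum K x c) μ :=
    .of_bound (continuous_quadSum hcont x c).aestronglyMeasurable _ (.of_forall hQ)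
  simp only [Pi.sub_apply, mul_sub, Finset.sum_sub_distrib]
  rw [sum_smoothing_eq_integral_quadSum hcont (hK.abs_le_apply_zero heven), sub_nonneg]
  calc ∫ y, quadSum K x c y ∂μ ≤ ∫ _, quadSum K x c 0 ∂μ :=
        integral_mono hint (integrable_const _) fun y => (le_abs_self _).trans (hQ y)
    _ = ∑ i, ∑ j, c i * c j * K (x i - x j) := by simp [quadSum]

end PosDefSmoothing

section Gaussian

open ProbabilityTheory Module
open scoped RealInnerProductSpace

theorem exp_neg_mul_sq_norm_mul_cosh {E : Type*} [NormedAddCommGroup E]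
    [InnerProductSpace ℝ E] (b : ℝ) (x y : E) :
    Real.exp (-b * ‖y‖ ^ 2) * Real.cosh (2 * b * ⟪x, y⟫) =
      Real.exp (b * ‖x‖ ^ 2) / 2 *
        (Real.exp (-b * ‖y - x‖ ^ 2) + Real.exp (-b * ‖y + x‖ ^ 2)) := by
  rw [Real.cosh_eq, div_mul_eq_mul_div, ← mul_div_assoc, mul_add, mul_add]
  simp only [← Real.exp_add, norm_sub_sq_real, norm_add_sq_real, real_inner_comm x y]
  ring_nf

variable (E : Type*) [NormedAddCommGroup E] [InnerProductSpace ℝ E] [FiniteDimensional ℝ E]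
  [MeasurableSpace E] [BorelSpace E] {σ : ℝ}

/-- The Gaussian measure with mean `0` and covariance `σ²` times the identity; it is the Dirac
mass at `0` for `σ = 0`. -/
noncomputable def centeredGaussian (σ : ℝ) : Measure E :=
  (stdGaussian E).map (σ • ·)

instance isProbabilityMeasure_centeredGaussian : IsProbabilityMeasure (centeredGaussian E σ) :=
  Measure.isProbabilityMeasure_map (by fun_prop)

instance isGaussian_centeredGaussian : IsGaussian (centeredGaussian E σ) :=
  isGaussian_map (σ • ContinuousLinearMap.id ℝ E)

theorem charFun_centeredGaussian (t : E) :
    charFun (centeredGaussian E σ) t = Complex.exp (-(σ ^ 2 * ‖t‖ ^ 2 / 2)) := by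
  rw [centeredGaussian, charFun_map_smul, charFun_stdGaussian, norm_smul, neg_div]
  norm_cast
  rw [mul_pow, Real.norm_eq_abs, sq_abs]

theorem map_centeredGaussian (ρ : E ≃ₗᵢ[ℝ] E) :
    (centeredGaussian E σ).map ρ = centeredGaussian E σ := by
  have hcomm : ρ ∘ (σ • ·) = (σ • ·) ∘ ρ := funext fun x => map_smul ρ σ x
  rw [centeredGaussian, Measure.map_map (by fun_prop) (by fun_prop), hcomm,
    ← Measure.map_map (by fun_prop) (by fun_prop), stdGaussian_map]

theorem centeredGaussian_conv_neg :
    centeredGaussian E (σ / √2) ∗ (centeredGaussian E (σ / √2)).neg = centeredGaussian E σ := by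
  have hneg : (centeredGaussian E (σ / √2)).neg = centeredGaussian E (σ / √2) :=
    map_centeredGaussian E (LinearIsometryEquiv.neg ℝ)
  rw [hneg]
  refine Measure.ext_of_charFun (funext fun t => ?_)
  simp only [charFun_conv, charFun_centeredGaussian, ← Complex.exp_add]
  norm_cast
  rw [div_pow, Real.sq_sqrt zero_le_two]
  ring_nf

theorem integrable_norm_pow_centeredGaussian (n : ℕ) :
    Integrable (fun y => ‖y‖ ^ n) (centeredGaussian E σ) :=
  (IsGaussian.memLp_id (centeredGaussian E σ) n (by simp)).integrable_norm_pow'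

variable {E}

theorem integrable_exp_neg_mul_sq_norm {b : ℝ} (hb : 0 < b) :
    Integrable fun x : E => Real.exp (-b * ‖x‖ ^ 2) := by
  refine .of_integral_ne_zero ?_
  rw [GaussianFourier.integral_rexp_neg_mul_sq_norm hb]
  positivity

theorem charFun_tilted_neg_mul_sq_norm {b : ℝ} (hb : 0 < b) (t : E) :
    charFun (volume.tilted fun x : E => -b * ‖x‖ ^ 2) t = Complex.exp (-(‖t‖ ^ 2 / (4 * b))) := by
  set Z : ℝ := ∫ x : E, Real.exp (-b * ‖x‖ ^ 2) with hZ_def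
  have hZ : (Z : ℂ) = (Real.pi / b) ^ (finrank ℝ E / 2 : ℂ) := by
    rw [hZ_def, GaussianFourier.integral_rexp_neg_mul_sq_norm hb,
      Complex.ofReal_cpow (by positivity)]
    push_cast
    rfl
  have hZ_ne : (Z : ℂ) ≠ 0 :=
    Complex.ofReal_ne_zero.2 (integral_exp_pos (integrable_exp_neg_mul_sq_norm hb)).ne'
  calc charFun (volume.tilted fun x : E => -b * ‖x‖ ^ 2) t
      = ∫ x : E, (Z : ℂ)⁻¹ * Complex.exp (-b * ‖x‖ ^ 2 + Complex.I * ⟪t, x⟫) := by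
        rw [charFun_apply, integral_tilted]
        refine integral_congr_ae (.of_forall fun x => ?_)
        simp only [Complex.real_smul, Complex.exp_add, real_inner_comm x t, ← hZ_def]
        push_cast
        ring_nf
    _ = Complex.exp (-(‖t‖ ^ 2 / (4 * b))) := by
        rw [integral_const_mul,
          GaussianFourier.integral_cexp_neg_mul_sq_norm_add (by simpa using hb), ← hZ,
          inv_mul_cancel_left₀ hZ_ne, Complex.I_sq, neg_one_mul, neg_div]

theorem centeredGaussian_eq_tilted (hσ : σ ≠ 0) :
    centeredGaussian E σ = volume.tilted fun x => -(2 * σ ^ 2)⁻¹ * ‖x‖ ^ 2 := by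
  have hb : 0 < (2 * σ ^ 2)⁻¹ := by positivity
  have := isProbabilityMeasure_tilted (integrable_exp_neg_mul_sq_norm (E := E) hb)
  refine Measure.ext_of_charFun (funext fun t => ?_)
  rw [charFun_centeredGaussian, charFun_tilted_neg_mul_sq_norm hb]
  norm_cast
  rw [show 4 * (2 * σ ^ 2)⁻¹ = 2 / σ ^ 2 by ring, div_div_eq_mul_div, mul_comm]

section Cosh

variable {f : E → ℝ} {b : ℝ} (hb : 0 < b) (hf : Continuous f) {B : ℝ} (hB : ∀ x, |f x| ≤ B)
include hb hf hB

theorem integrable_exp_neg_mul_sq_norm_sub_mul (x : E) :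
    Integrable fun y : E => Real.exp (-b * ‖y - x‖ ^ 2) * f y :=
  ((integrable_exp_neg_mul_sq_norm hb).comp_sub_right x).mul_bdd hf.aestronglyMeasurable
    (.of_forall hB)

theorem integrable_exp_neg_mul_sq_norm_mul_cosh (x : E) :
    Integrable fun y : E => Real.exp (-b * ‖y‖ ^ 2) * f y * Real.cosh (2 * b * ⟪x, y⟫) := by
  have hsub := integrable_exp_neg_mul_sq_norm_sub_mul hb hf hB x
  have hadd := integrable_exp_neg_mul_sq_norm_sub_mul hb hf hB (-x)
  refine ((hsub.add hadd).const_mul (Real.exp (b * ‖x‖ ^ 2) / 2)).congr (.of_forall fun y => ?_)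
  simp only [Pi.add_apply, sub_neg_eq_add]
  rw [mul_right_comm, exp_neg_mul_sq_norm_mul_cosh]
  ring

theorem integral_exp_neg_mul_sq_norm_mul_cosh (heven : Function.Even f) (x : E) :
    ∫ y : E, Real.exp (-b * ‖y‖ ^ 2) * f y * Real.cosh (2 * b * ⟪x, y⟫) =
      Real.exp (b * ‖x‖ ^ 2) * ∫ y : E, Real.exp (-b * ‖y‖ ^ 2) * f (x + y) := by
  have hsub := integrable_exp_neg_mul_sq_norm_sub_mul hb hf hB x
  have hadd := integrable_exp_neg_mul_sq_norm_sub_mul hb hf hB (-x)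
  have hsymm : ∫ y : E, Real.exp (-b * ‖y - -x‖ ^ 2) * f y =
      ∫ y : E, Real.exp (-b * ‖y - x‖ ^ 2) * f y := by
    rw [← integral_neg_eq_self]
    simp_rw [heven _, ← neg_sub', norm_neg]
  calc _ = ∫ y : E, Real.exp (b * ‖x‖ ^ 2) / 2 *
        (Real.exp (-b * ‖y - x‖ ^ 2) * f y + Real.exp (-b * ‖y - -x‖ ^ 2) * f y) := by
        congr with y
        rw [mul_right_comm, exp_neg_mul_sq_norm_mul_cosh, sub_neg_eq_add]
        ring
    _ = Real.exp (b * ‖x‖ ^ 2) * ∫ y : E, Real.exp (-b * ‖y - x‖ ^ 2) * f y := by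
        rw [integral_const_mul, integral_add hsub hadd, hsymm]
        ring
    _ = _ := by
        rw [← integral_add_left_eq_self _ x]
        simp_rw [add_sub_cancel_left]

end Cosh

end Gaussian

section RadialGrowth

open Module Metric
open scoped Pointwise

variable {E : Type*} [NormedAddCommGroup E] [NormedSpace ℝ E] [FiniteDimensional ℝ E]
  [MeasurableSpace E] [BorelSpace E] {μ : Measure E} [μ.IsAddHaarMeasure] {w : E → ℝ}
  (hw : Continuous w) (hmono : ∀ t : ℝ, 1 ≤ t → ∀ y, w y ≤ w (t • y))
include hw hmono

theorem pow_mul_setIntegral_closedBall_le {t : ℝ} (ht : 1 ≤ t) (r : ℝ) :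
    t ^ finrank ℝ E * ∫ y in closedBall 0 r, w y ∂μ ≤ ∫ y in closedBall 0 (t * r), w y ∂μ := by
  have ht0 : 0 < t := one_pos.trans_le ht
  have hdil : ∫ y in closedBall 0 r, w (t • y) ∂μ =
      (t ^ finrank ℝ E)⁻¹ * ∫ y in closedBall 0 (t * r), w y ∂μ := by
    rw [Measure.setIntegral_comp_smul_of_pos μ w _ ht0, smul_eq_mul,
      _root_.smul_closedBall' ht0.ne', smul_zero, Real.norm_of_nonneg ht0.le]
  have hball := isCompact_closedBall (0 : E) r
  calc t ^ finrank ℝ E * ∫ y in closedBall 0 r, w y ∂μ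
      ≤ t ^ finrank ℝ E * ∫ y in closedBall 0 r, w (t • y) ∂μ := by
        gcongr with y
        · exact hw.continuousOn.integrableOn_compact hball
        · exact (by fun_prop : Continuous fun y => w (t • y)).continuousOn.integrableOn_compact
            hball
        · exact measurableSet_closedBall.nullMeasurableSet
        · exact hmono t ht y
    _ = ∫ y in closedBall 0 (t * r), w y ∂μ := by
        rw [hdil, mul_inv_cancel_left₀ (by positivity)]

variable (hw0 : ∀ y, 0 ≤ w y)
include hw0

theorem setIntegral_closedBall_le_setIntegral_shell [Nontrivial E] {r : ℝ} (hr : 0 ≤ r) :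
    ∫ y in closedBall 0 r, w y ∂μ ≤ ∫ y in closedBall 0 (2 * r) \ closedBall 0 r, w y ∂μ := by
  have hint : IntegrableOn w (closedBall 0 (2 * r)) μ :=
    hw.continuousOn.integrableOn_compact (isCompact_closedBall _ _)
  have hpow : (2 : ℝ) ≤ 2 ^ finrank ℝ E :=
    le_self_pow₀ one_le_two finrank_pos.ne'
  have hnonneg : 0 ≤ ∫ y in closedBall 0 r, w y ∂μ := integral_nonneg hw0
  rw [setIntegral_sdiff measurableSet_closedBall hint (closedBall_subset_closedBall (by linarith)),
    le_sub_iff_add_le, ← two_mul]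
  exact (mul_le_mul_of_nonneg_right hpow hnonneg).trans
    (pow_mul_setIntegral_closedBall_le hw hmono one_le_two r)

variable [Nontrivial E] {g : E → ℝ} {M a : ℝ} (hM : 0 < M) (ha : 0 ≤ a)
include hM ha

/- The lower bound does not depend on `s`: the decay `‖y‖ ^ (-n)` of `g` exactly compensates the
growth of the volume of the shell. -/
theorem div_pow_mul_setIntegral_closedBall_le_setIntegral_shell {s : ℝ} (hs : 1 ≤ s)
    (hint : IntegrableOn (fun y => g y * w y) (closedBall 0 (2 * (s * M)) \ closedBall 0 (s * M)) μ)
    (hg : ∀ y ∈ closedBall 0 (2 * (s * M)) \ closedBall 0 (s * M), a ≤ g y * ‖y‖ ^ finrank ℝ E) :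
    a / (2 * M) ^ finrank ℝ E * ∫ y in closedBall 0 M, w y ∂μ ≤
      ∫ y in closedBall 0 (2 * (s * M)) \ closedBall 0 (s * M), g y * w y ∂μ := by
  set n := finrank ℝ E
  set shell := closedBall (0 : E) (2 * (s * M)) \ closedBall 0 (s * M)
  have hs0 : 0 < s := one_pos.trans_le hs
  have hg_lower (y : E) (hy : y ∈ shell) : a / (2 * (s * M)) ^ n ≤ g y := by
    have hy_le : ‖y‖ ≤ 2 * (s * M) := mem_closedBall_zero_iff.1 hy.1
    have hy_pos : 0 < ‖y‖ := (mul_pos hs0 hM).trans (by simpa using hy.2)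
    calc a / (2 * (s * M)) ^ n ≤ a / ‖y‖ ^ n := by gcongr
      _ ≤ g y := (div_le_iff₀ (by positivity)).2 (hg y hy)
  have hw_shell : IntegrableOn w shell μ :=
    (hw.continuousOn.integrableOn_compact (isCompact_closedBall _ _)).mono_set sdiff_subset
  calc a / (2 * M) ^ n * ∫ y in closedBall 0 M, w y ∂μ
      = a / (2 * (s * M)) ^ n * (s ^ n * ∫ y in closedBall 0 M, w y ∂μ) := by
        simp only [mul_pow]
        field_simp
    _ ≤ a / (2 * (s * M)) ^ n * ∫ y in shell, w y ∂μ := by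
        gcongr
        exact (pow_mul_setIntegral_closedBall_le hw hmono hs M).trans
          (setIntegral_closedBall_le_setIntegral_shell hw hmono hw0 (by positivity))
    _ ≤ ∫ y in shell, g y * w y ∂μ := by
        rw [← integral_const_mul]
        exact setIntegral_mono_on (hw_shell.const_mul _) hint
          (measurableSet_closedBall.diff measurableSet_closedBall)
          fun y hy => mul_le_mul_of_nonneg_right (hg_lower y hy) (hw0 y)

theorem nsmul_setIntegral_closedBall_le_setIntegral_annulus
    (hint : Integrable (fun y => g y * w y) μ) {N : ℕ}
    (hg : ∀ y ∈ closedBall 0 (2 ^ N * M) \ closedBall 0 M, a ≤ g y * ‖y‖ ^ finrank ℝ E) :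
    N • (a / (2 * M) ^ finrank ℝ E * ∫ y in closedBall 0 M, w y ∂μ) ≤
      ∫ y in closedBall 0 (2 ^ N * M) \ closedBall 0 M, g y * w y ∂μ := by
  induction N with
  | zero => simp
  | succ N ih =>
    have hpow : (1 : ℝ) ≤ 2 ^ N := one_le_pow₀ one_le_two
    have hinner : closedBall (0 : E) M ⊆ closedBall 0 (2 ^ N * M) :=
      closedBall_subset_closedBall (le_mul_of_one_le_left hM.le hpow)
    have houter : closedBall (0 : E) (2 ^ N * M) ⊆ closedBall 0 (2 * (2 ^ N * M)) :=
      closedBall_subset_closedBall (le_mul_of_one_le_left (by positivity) one_le_two)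
    rw [pow_succ', mul_assoc] at hg ⊢
    rw [← sdiff_union_sdiff_cancel houter hinner, setIntegral_union
      (disjoint_sdiff_left.mono_right sdiff_subset)
      (measurableSet_closedBall.diff measurableSet_closedBall) hint.integrableOn
      hint.integrableOn, succ_nsmul']
    exact add_le_add
      (div_pow_mul_setIntegral_closedBall_le_setIntegral_shell hw hmono hw0 hM ha hpow
        hint.integrableOn fun y hy => hg y ⟨hy.1, fun h => hy.2 (hinner h)⟩)
      (ih fun y hy => hg y ⟨houter hy.1, hy.2⟩)

theorem integral_mul_nonneg_of_annulus_le
    (hint : Integrable (fun y => g y * w y) μ) {B : ℝ} {N : ℕ}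
    (hB : ∀ y ∈ closedBall 0 M, -B ≤ g y)
    (hg0 : ∀ y ∉ closedBall 0 M, 0 ≤ g y)
    (hg : ∀ y ∈ closedBall 0 (2 ^ N * M) \ closedBall 0 M, a ≤ g y * ‖y‖ ^ finrank ℝ E)
    (hN : B * (2 * M) ^ finrank ℝ E ≤ N * a) :
    0 ≤ ∫ y, g y * w y ∂μ := by
  set I := ∫ y in closedBall 0 M, w y ∂μ
  have hI : 0 ≤ I := integral_nonneg hw0
  have hwint : IntegrableOn w (closedBall 0 M) μ :=
    hw.continuousOn.integrableOn_compact (isCompact_closedBall _ _)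
  have hinner : -B * I ≤ ∫ y in closedBall 0 M, g y * w y ∂μ := by
    rw [← integral_const_mul]
    exact setIntegral_mono_on (hwint.const_mul _) hint.integrableOn measurableSet_closedBall
      fun y hy => mul_le_mul_of_nonneg_right (hB y hy) (hw0 y)
  have houter : N • (a / (2 * M) ^ finrank ℝ E * I) ≤ ∫ y in (closedBall 0 M)ᶜ, g y * w y ∂μ :=
    (nsmul_setIntegral_closedBall_le_setIntegral_annulus hw hmono hw0 hM ha hint hg).trans <|
      setIntegral_mono_set hint.integrableOn
        ((ae_restrict_iff' measurableSet_closedBall.compl).2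
          (.of_forall fun y hy => mul_nonneg (hg0 y hy) (hw0 y)))
        (LE.le.eventuallyLE fun y hy => hy.2)
  have hbalance : B * I ≤ N • (a / (2 * M) ^ finrank ℝ E * I) := by
    rw [nsmul_eq_mul, ← mul_assoc, ← mul_div_assoc]
    gcongr
    rwa [le_div_iff₀ (by positivity)]
  rw [← integral_add_compl measurableSet_closedBall hint]
  linarith

end RadialGrowth

section GaussianPositivity

open Module Bornology
open scoped RealInnerProductSpace

theorem cosh_mul_inner_le_cosh_mul_inner_smul {E : Type*} [NormedAddCommGroup E]
    [InnerProductSpace ℝ E] (b : ℝ) (x : E) {t : ℝ} (ht : 1 ≤ t) (y : E) :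
    Real.cosh (b * ⟪x, y⟫) ≤ Real.cosh (b * ⟪x, t • y⟫) := by
  rw [Real.cosh_le_cosh, real_inner_smul_right, mul_left_comm, abs_mul t]
  exact le_mul_of_one_le_left (abs_nonneg _) (ht.trans (le_abs_self t))

theorem exp_neg_half_le_exp_neg_mul_sq {σ r : ℝ} (hσ : 0 < σ) (hr : 0 ≤ r) (hrσ : r ≤ σ) :
    Real.exp (-(1 / 2)) ≤ Real.exp (-(2 * σ ^ 2)⁻¹ * r ^ 2) := by
  rw [Real.exp_le_exp, neg_mul, neg_le_neg_iff, inv_mul_le_iff₀ (by positivity)]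
  calc r ^ 2 ≤ σ ^ 2 := by gcongr
    _ = 2 * σ ^ 2 * (1 / 2) := by ring

variable {E : Type*} [NormedAddCommGroup E] [InnerProductSpace ℝ E] [FiniteDimensional ℝ E]
  [MeasurableSpace E] [BorelSpace E] {f : E → ℝ} {B : ℝ}

theorem smoothing_centeredGaussian_nonneg (hf : Continuous f) (hB : ∀ x, |f x| ≤ B)
    (heven : Function.Even f) {σ : ℝ} (hσ : σ ≠ 0) {x : E}
    (hx : 0 ≤ ∫ y : E, Real.exp (-(2 * σ ^ 2)⁻¹ * ‖y‖ ^ 2) * f y *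
      Real.cosh (2 * (2 * σ ^ 2)⁻¹ * ⟪x, y⟫)) :
    0 ≤ smoothing (centeredGaussian E σ) f x := by
  rw [integral_exp_neg_mul_sq_norm_mul_cosh (by positivity) hf hB heven] at hx
  rw [smoothing, centeredGaussian_eq_tilted hσ, integral_tilted]
  simp only [smul_eq_mul, div_mul_eq_mul_div, integral_div]
  exact div_nonneg (nonneg_of_mul_nonneg_right hx (Real.exp_pos _))
    (integral_nonneg fun _ => (Real.exp_pos _).le)

/- Since `‖x‖ ^ (-n)` is not integrable at infinity, the positive mass of `f` in the annulus
`M ≤ ‖y‖ ≤ σ`, on which the Gaussian weight is at least `exp (-1 / 2)`, eventually outweighs the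
negative mass in the ball `‖y‖ ≤ M`. -/
theorem exists_forall_smoothing_centeredGaussian_nonneg [Nontrivial E] (hf : Continuous f)
    (hB : ∀ x, |f x| ≤ B) (heven : Function.Even f) {c : ℝ} (hc : 0 < c)
    (hlower : ∀ᶠ x in cobounded E, c ≤ f x * ‖x‖ ^ finrank ℝ E) :
    ∃ σ : ℝ, ∀ x, 0 ≤ smoothing (centeredGaussian E σ) f x := by
  obtain ⟨M, hM, hfM⟩ : ∃ M > 0, ∀ x, M < ‖x‖ → c ≤ f x * ‖x‖ ^ finrank ℝ E := by
    obtain ⟨M, hM⟩ := eventually_atTop.1 (eventually_comap.1 (comap_norm_atTop (E := E) ▸ hlower))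
    exact ⟨max M 1, by positivity, fun x hx => hM _ ((le_max_left M 1).trans hx.le) x rfl⟩
  have hf0 (y : E) (hy : M < ‖y‖) : 0 < f y :=
    pos_of_mul_pos_left (hc.trans_le (hfM y hy)) (by positivity)
  obtain ⟨N, hN⟩ := exists_nat_ge (B * (2 * M) ^ finrank ℝ E / (c * Real.exp (-(1 / 2))))
  rw [div_le_iff₀ (by positivity)] at hN
  let σ := 2 ^ N * M
  have hσ : 0 < σ := by positivity
  have hweight_le (y : E) : Real.exp (-(2 * σ ^ 2)⁻¹ * ‖y‖ ^ 2) ≤ 1 :=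
    Real.exp_le_one_iff.2
      (mul_nonpos_of_nonpos_of_nonneg (neg_nonpos.2 (by positivity)) (by positivity))
  refine ⟨σ, fun x => smoothing_centeredGaussian_nonneg hf hB heven hσ.ne' ?_⟩
  refine integral_mul_nonneg_of_annulus_le (by fun_prop)
    (fun t ht => cosh_mul_inner_le_cosh_mul_inner_smul _ x ht) (fun _ => (Real.cosh_pos _).le) hM
    (a := c * Real.exp (-(1 / 2))) (by positivity)
    (integrable_exp_neg_mul_sq_norm_mul_cosh (by positivity) hf hB x)
    (B := B) (N := N) (fun y _ => ?_) (fun y hy => ?_) (fun y hy => ?_) hN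
  · refine neg_le_of_abs_le ?_
    rw [abs_mul, Real.abs_exp]
    exact (mul_le_of_le_one_left (abs_nonneg _) (hweight_le y)).trans (hB y)
  · exact mul_nonneg (Real.exp_pos _).le (hf0 y (by simpa using hy)).le
  · have hy_far := hfM y (by simpa using hy.2)
    have hy_near := exp_neg_half_le_exp_neg_mul_sq hσ (norm_nonneg y) (by simpa using hy.1)
    rw [mul_assoc, mul_comm c]
    exact mul_le_mul hy_near hy_far hc.le (Real.exp_pos _).le

end GaussianPositivity

section Asymptotics

open Bornology

variable {E : Type*} [NormedAddCommGroup E] {f : E → ℝ} {k : ℝ → ℝ}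

theorem abs_norm_add_div_norm_sub_one_le {x : E} (hx : x ≠ 0) (y : E) :
    |‖x + y‖ / ‖x‖ - 1| ≤ ‖y‖ / ‖x‖ := by
  have hx' := norm_ne_zero_iff.2 hx
  rw [div_sub_one hx', abs_div, abs_norm]
  gcongr
  simpa using abs_norm_sub_norm_le (x + y) x

theorem tendsto_norm_add_div_norm (y : E) :
    Tendsto (fun x => ‖x + y‖ / ‖x‖) (cobounded E) (𝓝 1) := by
  rw [tendsto_iff_dist_tendsto_zero]
  refine squeeze_zero' (.of_forall fun _ => dist_nonneg) ?_
    (tendsto_norm_cobounded_atTop.const_div_atTop ‖y‖)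
  filter_upwards [eventually_ne_cobounded 0] with x hx
  exact abs_norm_add_div_norm_sub_one_le hx y

variable (hrad : ∀ x, f x = k ‖x‖)
  (hratio : Tendsto (fun p : ℝ × ℝ => k (p.2 * p.1) / k p.1) (atTop ×ˢ 𝓝 1) (𝓝 1))
include hrad hratio

theorem tendsto_translate_div (y : E) :
    Tendsto (fun x => f (x + y) / f x) (cobounded E) (𝓝 1) := by
  refine (hratio.comp (tendsto_norm_cobounded_atTop.prodMk (tendsto_norm_add_div_norm y))).congr' ?_
  filter_upwards [eventually_ne_cobounded 0] with x hx
  simp only [Function.comp_apply, hrad, div_mul_cancel₀ _ (norm_ne_zero_iff.2 hx)]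

theorem exists_eventually_abs_translate_div_le :
    ∃ δ > 0, ∀ᶠ x in cobounded E, ∀ y, ‖y‖ ≤ δ * ‖x‖ → |f (x + y) / f x| ≤ 2 := by
  have hbound := hratio.abs.eventually_le_const (u := 2) (by norm_num)
  obtain ⟨p, hp, q, hq, hpq⟩ := eventually_prod_iff.1 hbound
  obtain ⟨δ, hδ, hδq⟩ := Metric.nhds_basis_closedBall.eventually_iff.1 hq
  refine ⟨δ, hδ, ?_⟩
  filter_upwards [tendsto_norm_cobounded_atTop.eventually hp, eventually_ne_cobounded 0]
    with x hpx hx y hy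
  have hx' := norm_pos_iff.2 hx
  have hclose : |‖x + y‖ / ‖x‖ - 1| ≤ δ :=
    (abs_norm_add_div_norm_sub_one_le hx y).trans ((div_le_iff₀ hx').2 hy)
  simpa only [hrad, div_mul_cancel₀ _ hx'.ne'] using hpq hpx (hδq (Metric.mem_closedBall.2 hclose))

variable {n : ℕ} {c B : ℝ} (hc : 0 < c) (hlower : ∀ᶠ x in cobounded E, c ≤ f x * ‖x‖ ^ n)
  (hB : ∀ x, |f x| ≤ B)
include hc hlower hB

/- The ratio is at most `2` for `‖y‖ ≤ δ * ‖x‖`, and otherwise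
`f x ≥ c * ‖x‖ ^ (-n) ≥ c * (δ / ‖y‖) ^ n`. -/
theorem exists_eventually_abs_translate_div_le_add_mul_norm_pow :
    ∃ C, ∀ᶠ x in cobounded E, ∀ y, |f (x + y) / f x| ≤ 2 + C * ‖y‖ ^ n := by
  obtain ⟨δ, hδ, hnear⟩ := exists_eventually_abs_translate_div_le hrad hratio
  have hB0 : 0 ≤ B := (abs_nonneg _).trans (hB 0)
  refine ⟨B / (c * δ ^ n), ?_⟩
  filter_upwards [hnear, hlower] with x hxnear hx y
  rcases le_or_gt ‖y‖ (δ * ‖x‖) with hy | hy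
  · exact (hxnear y hy).trans (le_add_of_nonneg_right (by positivity))
  have hfx : 0 < f x := pos_of_mul_pos_left (hc.trans_le hx) (by positivity)
  have hcf : c * δ ^ n ≤ f x * ‖y‖ ^ n := calc
    c * δ ^ n ≤ f x * ‖x‖ ^ n * δ ^ n := by gcongr
    _ = f x * (δ * ‖x‖) ^ n := by ring
    _ ≤ f x * ‖y‖ ^ n := by gcongr
  calc |f (x + y) / f x| ≤ B / f x := by
        rw [abs_div, abs_of_pos hfx]
        gcongr
        exact hB _
    _ ≤ B / (c * δ ^ n) * ‖y‖ ^ n := by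
        rw [div_mul_eq_mul_div, div_le_div_iff₀ hfx (by positivity), mul_assoc, mul_comm _ (f x)]
        gcongr
    _ ≤ 2 + B / (c * δ ^ n) * ‖y‖ ^ n := le_add_of_nonneg_left zero_le_two

theorem tendsto_smoothing_div [MeasurableSpace E] [BorelSpace E]
    {μ : Measure E} [IsProbabilityMeasure μ] (hf : Continuous f)
    (hmoment : Integrable (fun y => ‖y‖ ^ n) μ) :
    Tendsto (fun x => smoothing μ f x / f x) (cobounded E) (𝓝 1) := by
  obtain ⟨C, hC⟩ :=
    exists_eventually_abs_translate_div_le_add_mul_norm_pow hrad hratio hc hlower hB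
  have : (cobounded E).IsCountablyGenerated := comap_norm_atTop (E := E) ▸ inferInstance
  have hlim := tendsto_integral_filter_of_dominated_convergence (fun y => 2 + C * ‖y‖ ^ n)
    (.of_forall fun x =>
      (by fun_prop : Continuous fun y => f (x + y) / f x).aestronglyMeasurable)
    (hC.mono fun x hx => .of_forall hx) ((integrable_const 2).add (hmoment.const_mul C))
    (.of_forall fun y => tendsto_translate_div hrad hratio y)
  simpa only [smoothing, integral_div, integral_const, probReal_univ, one_smul] using hlim

end Asymptotics

/-- a continuous isotropic positive definite kernel on `ℝ^d` whose radial
profile is regularly varying with index `α ∈ [0,d)` can be decomposed as `h = h₁ + h₂` with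
`h₁, h₂` continuous isotropic positive definite, `h₁ ≥ 0` and `h₁(x)/h(x) → 1` as
`|x| → ∞`. -/
theorem statement4 (d : ℕ) (hd : 1 ≤ d)
    (h : EuclideanSpace ℝ (Fin d) → ℝ) (k : ℝ → ℝ)
    (hcont : Continuous h) (hrad : ∀ x, h x = k ‖x‖) (hpd : IsPosDefKernel h)
    (α : ℝ) (hα0 : 0 ≤ α) (hαd : α < d) (hrv : RegularlyVarying k α) :
    ∃ h₁ h₂ : EuclideanSpace ℝ (Fin d) → ℝ,
      Continuous h₁ ∧ Continuous h₂ ∧ IsIsotropic h₁ ∧ IsIsotropic h₂ ∧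
      IsPosDefKernel h₁ ∧ IsPosDefKernel h₂ ∧ h = h₁ + h₂ ∧ (∀ x, 0 ≤ h₁ x) ∧
      Tendsto (fun x => h₁ x / h x) (comap (fun x => ‖x‖) atTop) (nhds 1) := by
  have : NeZero d := ⟨by omega⟩
  have heven : Function.Even h := fun x => by rw [hrad, hrad, norm_neg]
  have hiso : IsIsotropic h := fun x y hxy => by rw [hrad, hrad, hxy]
  have hbound := hpd.abs_le_apply_zero heven
  obtain ⟨c, hc, hkc⟩ := hrv.exists_eventually_le_mul_rpow hαd
  have hlower : ∀ᶠ x in Bornology.cobounded _, c ≤ h x * ‖x‖ ^ d := by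
    filter_upwards [tendsto_norm_cobounded_atTop.eventually hkc] with x hx
    rwa [hrad, ← Real.rpow_natCast]
  obtain ⟨σ, hnonneg⟩ := exists_forall_smoothing_centeredGaussian_nonneg hcont hbound heven hc
    (by simpa only [finrank_euclideanSpace_fin] using hlower)
  set μ := centeredGaussian (EuclideanSpace ℝ (Fin d)) σ
  have hμ_conv : _ = μ := centeredGaussian_conv_neg _
  have hμ_iso : IsIsotropic (smoothing μ h) := hiso.smoothing (map_centeredGaussian _)
  have hμ_cont : Continuous (smoothing μ h) := continuous_smoothing hcont hbound
  refine ⟨smoothing μ h, h - smoothing μ h, hμ_cont, hcont.sub hμ_cont, hμ_iso,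
    fun x y hxy => congrArg₂ (· - ·) (hiso x y hxy) (hμ_iso x y hxy),
    hμ_conv ▸ hpd.smoothing_conv_neg hcont heven _, hpd.sub_smoothing hcont heven μ,
    (add_sub_cancel _ _).symm, hnonneg, ?_⟩
  rw [comap_norm_atTop]
  exact tendsto_smoothing_div hrad hrv.tendsto_div_atTop_prod_nhds_one hc hlower hbound hcont
    (integrable_norm_pow_centeredGaussian _ d)
end
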